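/- arXiv:1108.5923 — 4 statements merged into one kernel-verified Lean document; each statement's English description precedes it below -/
import Mathlib

section
/- Let H be a complex Hilbert space and let J : H → H be a continuous linear operator with J* = J and J ∘ J = id. For a subspace N of H set N^[⊥] := {x ∈ H : ⟪J x, y⟫ = 0 for all y ∈ N}. If L ⊆ M are closed subspaces of H, then M^[⊥] ⊆ L^[⊥] and the quotient vector space L^[⊥]/M^[⊥] has the same dimension (rank as a ℂ-module) as the quotient M/L. -/
/-!
Both quotients are isomorphic to the subspace `M ⊓ Lᗮ`, with `ᗮ` the Hilbert space orthogonal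
complement. The orthogonal projection onto `Lᗮ`, restricted to `M`, has kernel `L` and range
`M ⊓ Lᗮ`. On the other side `x ∈ N^[⊥]` means `J x ∈ Nᗮ`, so `x ↦ P_M (J x)` on `L^[⊥]` has
kernel `M^[⊥]`; its range is again `M ⊓ Lᗮ`, because `J` is an involution and `Mᗮ ≤ Lᗮ`.
-/

open scoped InnerProductSpace

/-- The `[·,·]`-orthogonal complement of `N` with respect to the indefinite inner
product `[x, y] := ⟪J x, y⟫` induced by the fundamental symmetry `J`. -/
def kreinOrthogonal {H : Type*} [NormedAddCommGroup H] [InnerProductSpace ℂ H]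
    (J : H →L[ℂ] H) (N : Submodule ℂ H) : Submodule ℂ H where
  carrier := {x : H | ∀ y ∈ N, ⟪J x, y⟫_ℂ = 0}
  zero_mem' := by
    intro y hy
    simp
  add_mem' := by
    intro a b ha hb y hy
    rw [map_add, inner_add_left, ha y hy, hb y hy, add_zero]
  smul_mem' := by
    intro c a ha y hy
    rw [map_smul, inner_smul_left, ha y hy, mul_zero]

universe u in
/-- The first isomorphism theorem for ranks, with the kernel and range prescribed. -/
theorem rank_quotient_eq_rank_of_ker_range {V W : Type u} [AddCommGroup V] [Module ℂ V]
    [AddCommGroup W] [Module ℂ W] (f : V →ₗ[ℂ] W) {K : Submodule ℂ V} {R : Submodule ℂ W}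
    (hK : LinearMap.ker f = K) (hR : LinearMap.range f = R) :
    Module.rank ℂ (V ⧸ K) = Module.rank ℂ R := by
  subst hK hR
  exact f.quotKerEquivRange.rank_eq

theorem stmt0 {H : Type*} [NormedAddCommGroup H] [InnerProductSpace ℂ H] [CompleteSpace H]
    (J : H →L[ℂ] H) (hJ : ContinuousLinearMap.adjoint J = J) (hJJ : ∀ x, J (J x) = x)
    (L M : Submodule ℂ H) (hL : IsClosed (L : Set H)) (hM : IsClosed (M : Set H))
    (hLM : L ≤ M) :
    kreinOrthogonal J M ≤ kreinOrthogonal J L ∧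
      Module.rank ℂ
        (↥(kreinOrthogonal J L) ⧸
          Submodule.comap (kreinOrthogonal J L).subtype (kreinOrthogonal J M)) =
      Module.rank ℂ (↥M ⧸ Submodule.comap M.subtype L) := by
  have : CompleteSpace L := hL.completeSpace_coe
  have : CompleteSpace M := hM.completeSpace_coe
  refine ⟨fun x hx y hy => hx y (hLM hy), ?_⟩
  have hmem : ∀ (N : Submodule ℂ H) (x : H), x ∈ kreinOrthogonal J N ↔ J x ∈ Nᗮ :=
    fun N x => (Submodule.mem_orthogonal' N (J x)).symm
  have hMLperp : Mᗮ ≤ Lᗮ := Submodule.orthogonal_le hLM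
  refine (rank_quotient_eq_rank_of_ker_range
      ((M.starProjection.toLinearMap ∘ₗ J.toLinearMap) ∘ₗ (kreinOrthogonal J L).subtype)
      (R := M ⊓ Lᗮ) ?_ ?_).trans
    (rank_quotient_eq_rank_of_ker_range (Lᗮ.starProjection.toLinearMap ∘ₗ M.subtype)
      (R := M ⊓ Lᗮ) ?_ ?_).symm
  · ext x
    simp [hmem, Submodule.starProjection_apply_eq_zero_iff]
  · ext y
    constructor
    · rintro ⟨x, rfl⟩
      refine ⟨M.starProjection_apply_mem _, ?_⟩
      -- `J x` lies in `Lᗮ`, and its projection to `M` differs from it by an element of `Mᗮ ≤ Lᗮ`.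
      have h := Lᗮ.sub_mem ((hmem L x).1 x.2) (hMLperp (M.sub_starProjection_mem_orthogonal (J x)))
      simpa using h
    · rintro ⟨hyM, hyL⟩
      refine ⟨⟨J y, (hmem L _).2 (by rwa [hJJ])⟩, ?_⟩
      simpa [hJJ] using Submodule.starProjection_eq_self_iff.2 hyM
  · ext x
    rw [LinearMap.mem_ker, Submodule.mem_comap]
    exact Lᗮ.starProjection_apply_eq_zero_iff.trans
      (by rw [Submodule.orthogonal_orthogonal])
  · ext y
    constructor
    · rintro ⟨x, rfl⟩
      refine ⟨?_, Lᗮ.starProjection_apply_mem _⟩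
      have h := M.sub_mem x.2 (hLM (L.starProjection_apply_mem (x : H)))
      simpa [Submodule.starProjection_orthogonal] using h
    · rintro ⟨hyM, hyL⟩
      exact ⟨⟨y, hyM⟩, Submodule.starProjection_eq_self_iff.2 hyL⟩
end

section
/- Let A be a densely defined closed symmetric operator in a complex Hilbert space H whose deficiency indices m := dim ker(A* − i) and n := dim ker(A* + i) are finite, and assume dim(dom A*/dom A) = m + n =: p. Let Ã be a closed operator with A ⊆ Ã ⊆ A* (inclusion of graphs) and let r be a natural number. Then dim(dom Ã/dom A) = r if and only if dim(dom Ã*/dom A) = p − r; moreover in this case A ⊆ Ã* ⊆ A*. -/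
/-!
On `dom A*` consider the boundary form `ω(f, g) = ⟪A* f, g⟫ - ⟪f, A* g⟫`. It vanishes as soon as one
argument lies in `dom A`, and since `A` is closed its radical is exactly `dom A`
(`mem_domain_of_boundaryForm_eq_zero`, which is the inclusion `A** ⊆ A` in disguise). Hence `ω`
descends to a nondegenerate sesquilinear form on the finite-dimensional space `dom A* / dom A`.

For `A ≤ B ≤ A*` one has `A ≤ B* ≤ A*`, and `dom B*` is the `ω`-annihilator of `dom B`
(`mem_adjoint_domain_iff_boundaryForm`). In a finite-dimensional space a subspace and its
annihilator under a nondegenerate form have complementary dimensions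
(`finrank_add_finrank_annihilator`), so the dimensions of `dom B / dom A` and `dom B* / dom A` add
up to that of `dom A* / dom A`.
-/

open scoped InnerProductSpace

/-- An injective map twisted by conjugation preserves the dimension of a submodule. -/
lemma finrank_map_conj {V W : Type*} [AddCommGroup V] [Module ℂ V] [AddCommGroup W] [Module ℂ W]
    (φ : V →ₗ⋆[ℂ] W) (hφ : Function.Injective φ) (S : Submodule ℂ V) :
    Module.finrank ℂ (S.map φ) = Module.finrank ℂ S := by
  let j := Submodule.equivMapOfInjective φ hφ S
  have h := lift_rank_eq_of_equiv_equiv (starRingEnd ℂ) j.toAddEquiv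
    (starRingAut (R := ℂ)).bijective (fun r x => j.map_smulₛₗ r x)
  have h2 := congrArg Cardinal.toNat h
  rw [Cardinal.toNat_lift, Cardinal.toNat_lift] at h2
  exact h2.symm

/-- For a nondegenerate sesquilinear form, a subspace and its annihilator have complementary
dimensions. -/
lemma finrank_add_finrank_annihilator {Q : Type*} [AddCommGroup Q] [Module ℂ Q]
    [FiniteDimensional ℂ Q] (φ : Q →ₗ⋆[ℂ] Module.Dual ℂ Q) (hφ : Function.Injective φ)
    (V V' : Submodule ℂ Q) (hV : ∀ q, q ∈ V' ↔ ∀ v ∈ V, φ q v = 0) :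
    Module.finrank ℂ V + Module.finrank ℂ V' = Module.finrank ℂ Q := by
  have htop : (⊤ : Submodule ℂ Q).map φ = ⊤ := by
    apply Submodule.eq_top_of_finrank_eq
    rw [finrank_map_conj φ hφ, finrank_top, Subspace.dual_finrank_eq]
  have hann : V'.map φ = V.dualAnnihilator := by
    ext ψ
    rw [Submodule.mem_map, Submodule.mem_dualAnnihilator]
    constructor
    · rintro ⟨q, hq, rfl⟩
      exact (hV q).1 hq
    · intro h
      obtain ⟨q, -, rfl⟩ : ψ ∈ (⊤ : Submodule ℂ Q).map φ := htop ▸ Submodule.mem_top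
      exact ⟨q, (hV q).2 h, rfl⟩
  rw [← finrank_map_conj φ hφ V', hann]
  exact Subspace.finrank_add_finrank_dualAnnihilator_eq V

/-- For `P ≤ D`, the quotient `P / (N ∩ P)` is the image of `P` in `D / (N ∩ D)`. -/
lemma rank_quotient_eq_range {E : Type*} [AddCommGroup E] [Module ℂ E]
    (N P D : Submodule ℂ E) (h : P ≤ D) :
    Module.rank ℂ (P ⧸ Submodule.comap P.subtype N) =
      Module.rank ℂ (LinearMap.range
        ((Submodule.comap D.subtype N).mkQ ∘ₗ Submodule.inclusion h)) := by
  have hk : Submodule.comap P.subtype N = LinearMap.ker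
      ((Submodule.comap D.subtype N).mkQ ∘ₗ Submodule.inclusion h) := by
    rw [LinearMap.ker_comp, Submodule.ker_mkQ]
    rfl
  rw [hk]
  exact (LinearMap.quotKerEquivRange _).rank_eq

section

variable {H : Type*} [NormedAddCommGroup H] [InnerProductSpace ℂ H] [CompleteSpace H]

/-- The boundary form `ω(f, g) = ⟪A* f, g⟫ - ⟪f, A* g⟫` on the domain of `A*`, conjugate-linear in
`f` and linear in `g`. -/
noncomputable def boundaryForm (A : H →ₗ.[ℂ] H) :
    A.adjoint.domain →ₗ⋆[ℂ] A.adjoint.domain →ₗ[ℂ] ℂ :=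
  LinearMap.mk₂'ₛₗ (starRingEnd ℂ) (RingHom.id ℂ)
    (fun f g => ⟪A.adjoint f, (g : H)⟫_ℂ - ⟪(f : H), A.adjoint g⟫_ℂ)
    (fun f f' g => by simp [LinearPMap.map_add]; ring)
    (fun c f g => by simp [LinearPMap.map_smul]; ring)
    (fun f g g' => by simp [LinearPMap.map_add]; ring)
    (fun c f g => by simp [LinearPMap.map_smul]; ring)

lemma boundaryForm_apply (A : H →ₗ.[ℂ] H) (f g : A.adjoint.domain) :
    boundaryForm A f g = ⟪A.adjoint f, (g : H)⟫_ℂ - ⟪(f : H), A.adjoint g⟫_ℂ := rfl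

/-- If `A ≤ B ≤ A*`, the domain of `B*` is the annihilator of `dom B` under the boundary form. -/
lemma mem_adjoint_domain_iff_boundaryForm {A B : H →ₗ.[ℂ] H} (hB : Dense (B.domain : Set H))
    (hBA : B ≤ A.adjoint) (hBA' : B.adjoint ≤ A.adjoint) (f : A.adjoint.domain) :
    (f : H) ∈ B.adjoint.domain ↔
      ∀ g : A.adjoint.domain, (g : H) ∈ B.domain → boundaryForm A f g = 0 := by
  constructor
  · intro hf g hg
    have h := LinearPMap.adjoint_isFormalAdjoint hB ⟨f, hf⟩ ⟨g, hg⟩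
    rw [hBA.2 (x := ⟨g, hg⟩) (y := g) rfl, hBA'.2 (x := ⟨f, hf⟩) (y := f) rfl] at h
    rw [boundaryForm_apply, sub_eq_zero]
    exact h
  · intro h
    refine LinearPMap.mem_adjoint_domain_of_exists _ ⟨A.adjoint f, fun x => ?_⟩
    have h2 := h ⟨x, hBA.1 x.2⟩ x.2
    rw [boundaryForm_apply, sub_eq_zero] at h2
    rw [hBA.2 (x := x) (y := ⟨x, hBA.1 x.2⟩) rfl]
    exact h2

/-- The radical of the boundary form of a closed operator lies in the domain of the operator: a
vector of the graph of `A*` on which the form vanishes is orthogonal to the orthogonal complement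
of the graph of `A`, since this complement consists of the pairs `(-A* v, v)`. -/
lemma mem_domain_of_boundaryForm_eq_zero {A : H →ₗ.[ℂ] H} (hdense : Dense (A.domain : Set H))
    (hclosed : A.IsClosed) (f : A.adjoint.domain)
    (hf : ∀ g, boundaryForm A f g = 0) : (f : H) ∈ A.domain := by
  let G : Submodule ℂ (WithLp 2 (H × H)) :=
    A.graph.comap (WithLp.linearEquiv 2 ℂ (H × H)).toLinearMap
  have hG : IsClosed (G : Set (WithLp 2 (H × H))) :=
    IsClosed.preimage (WithLp.prod_continuous_ofLp 2 H H) hclosed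
  have hmem : WithLp.toLp 2 ((f : H), A.adjoint f) ∈ Gᗮᗮ := by
    rw [Submodule.mem_orthogonal]
    intro v hv
    rw [Submodule.mem_orthogonal'] at hv
    have hv' : ∀ x : A.domain, ⟪-v.fst, (x : H)⟫_ℂ = ⟪v.snd, A x⟫_ℂ := by
      intro x
      have h := hv (WithLp.toLp 2 ((x : H), A x)) (A.mem_graph x)
      rw [WithLp.prod_inner_apply] at h
      rw [inner_neg_left]
      exact neg_eq_of_add_eq_zero_right h
    have hd : v.snd ∈ A.adjoint.domain :=
      LinearPMap.mem_adjoint_domain_of_exists _ ⟨_, hv'⟩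
    have hval : A.adjoint ⟨v.snd, hd⟩ = -v.fst := LinearPMap.adjoint_apply_eq hdense _ hv'
    have h := hf ⟨v.snd, hd⟩
    rw [boundaryForm_apply, hval, inner_neg_right, sub_neg_eq_add] at h
    have h2 := congrArg (starRingEnd ℂ) h
    rw [map_add, inner_conj_symm, inner_conj_symm, map_zero] at h2
    rw [WithLp.prod_inner_apply, add_comm]
    exact h2
  have : CompleteSpace G := hG.completeSpace_coe
  rw [Submodule.orthogonal_orthogonal] at hmem
  exact LinearPMap.mem_domain_of_mem_graph hmem

end

theorem stmt2 {H : Type*} [NormedAddCommGroup H] [InnerProductSpace ℂ H] [CompleteSpace H]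
    (A : H →ₗ.[ℂ] H) (hdense : Dense (A.domain : Set H)) (hclosed : A.IsClosed)
    (hsymm : ∀ f g : A.domain, ⟪A f, (g : H)⟫_ℂ = ⟪(f : H), A g⟫_ℂ)
    (m n r : ℕ) (hr : r ≤ m + n)
    (hm : Module.rank ℂ
        ↥(LinearMap.ker (A.adjoint.toFun - Complex.I • A.adjoint.domain.subtype)) = m)
    (hn : Module.rank ℂ
        ↥(LinearMap.ker (A.adjoint.toFun + Complex.I • A.adjoint.domain.subtype)) = n)
    (hp : Module.rank ℂ
        (↥A.adjoint.domain ⧸ Submodule.comap A.adjoint.domain.subtype A.domain) = (m + n : ℕ))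
    (B : H →ₗ.[ℂ] H) (hBclosed : B.IsClosed) (hAB : A ≤ B) (hBA : B ≤ A.adjoint) :
    (Module.rank ℂ (↥B.domain ⧸ Submodule.comap B.domain.subtype A.domain) = r ↔
      Module.rank ℂ
        (↥B.adjoint.domain ⧸ Submodule.comap B.adjoint.domain.subtype A.domain) =
          ((m + n - r : ℕ) : Cardinal)) ∧
    A ≤ B.adjoint ∧ B.adjoint ≤ A.adjoint := by
  have hBdense : Dense (B.domain : Set H) := hdense.mono hAB.1
  have hadj := LinearPMap.adjoint_isFormalAdjoint hdense
  have hABadj : A ≤ B.adjoint := by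
    refine LinearPMap.IsFormalAdjoint.le_adjoint hBdense fun b a => ?_
    rw [hBA.2 (x := b) (y := ⟨b, hBA.1 b.2⟩) rfl]
    exact hadj ⟨b, hBA.1 b.2⟩ a
  have hBadjA : B.adjoint ≤ A.adjoint := by
    refine LinearPMap.IsFormalAdjoint.le_adjoint hdense fun a f => ?_
    rw [hAB.2 (x := a) (y := ⟨a, hAB.1 a.2⟩) rfl]
    exact (LinearPMap.adjoint_isFormalAdjoint hBdense).symm ⟨a, hAB.1 a.2⟩ f
  refine ⟨?_, hABadj, hBadjA⟩
  have hAA : A ≤ A.adjoint := hAB.trans hBA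
  set N := Submodule.comap A.adjoint.domain.subtype A.domain with hN
  have hright : ∀ f g, g ∈ N → boundaryForm A f g = 0 := by
    intro f g hg
    have h := hadj f ⟨g, hg⟩
    rw [hAA.2 (x := ⟨g, hg⟩) (y := g) rfl] at h
    rw [boundaryForm_apply, sub_eq_zero]
    exact h
  have hleft : ∀ f g, f ∈ N → boundaryForm A f g = 0 := by
    intro f g hf
    have h := hadj.symm ⟨f, hf⟩ g
    rw [hAA.2 (x := ⟨f, hf⟩) (y := f) rfl] at h
    rw [boundaryForm_apply, sub_eq_zero]
    exact h
  -- The boundary form descends to `dom A* / dom A`, where it is nondegenerate.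
  let Ψ : A.adjoint.domain →ₗ⋆[ℂ] Module.Dual ℂ (A.adjoint.domain ⧸ N) :=
    { toFun := fun f => N.liftQ (boundaryForm A f) fun g hg => hright f g hg
      map_add' := fun f f' => by
        ext g
        change boundaryForm A (f + f') g = boundaryForm A f g + boundaryForm A f' g
        rw [map_add, LinearMap.add_apply]
      map_smul' := fun c f => by
        ext g
        change boundaryForm A (c • f) g = (starRingEnd ℂ) c • boundaryForm A f g
        rw [map_smulₛₗ, LinearMap.smul_apply] }
  let φ := N.liftQ Ψ fun f hf => by
    rw [LinearMap.mem_ker]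
    ext g
    exact hleft f g hf
  have hφ : ∀ f g, φ (N.mkQ f) (N.mkQ g) = boundaryForm A f g := fun f g => rfl
  have hinj : Function.Injective φ := by
    rw [injective_iff_map_eq_zero]
    intro q hq
    obtain ⟨f, rfl⟩ := N.mkQ_surjective q
    rw [Submodule.mkQ_apply, Submodule.Quotient.mk_eq_zero]
    refine mem_domain_of_boundaryForm_eq_zero hdense hclosed f fun g => ?_
    rw [← hφ, hq, LinearMap.zero_apply]
  have hfin : FiniteDimensional ℂ (A.adjoint.domain ⧸ N) :=
    Module.rank_lt_aleph0_iff.1 (hp ▸ Cardinal.natCast_lt_aleph0)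
  have hsum := finrank_add_finrank_annihilator φ hinj
    (LinearMap.range (N.mkQ ∘ₗ Submodule.inclusion hBA.1))
    (LinearMap.range (N.mkQ ∘ₗ Submodule.inclusion hBadjA.1)) (by
      intro q
      obtain ⟨f, rfl⟩ := N.mkQ_surjective q
      have h1 : N.mkQ f ∈ LinearMap.range (N.mkQ ∘ₗ Submodule.inclusion hBadjA.1) ↔
          (f : H) ∈ B.adjoint.domain := by
        constructor
        · rintro ⟨x, hx⟩
          have hx' := (Submodule.Quotient.eq N).1 hx
          have := B.adjoint.domain.sub_mem x.2 (hABadj.1 hx')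
          simpa using this
        · intro hf
          exact ⟨⟨f, hf⟩, rfl⟩
      rw [h1, mem_adjoint_domain_iff_boundaryForm hBdense hBA hBadjA]
      constructor
      · rintro h _ ⟨x, rfl⟩
        exact h (Submodule.inclusion hBA.1 x) x.2
      · intro h g hg
        exact h (N.mkQ g) ⟨⟨g, hg⟩, rfl⟩)
  rw [Module.finrank_eq_of_rank_eq hp] at hsum
  rw [rank_quotient_eq_range A.domain B.domain A.adjoint.domain hBA.1,
    rank_quotient_eq_range A.domain B.adjoint.domain A.adjoint.domain hBadjA.1,
    ← Module.finrank_eq_rank, ← Module.finrank_eq_rank, Nat.cast_inj, Nat.cast_inj, ← hN]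
  omega
end

section
/- Let a, b, c, d ∈ ℂ. Then the 2×2 matrix identity [[a, b], [c, d]] · [[conj(d), −conj(b)], [−conj(c), conj(a)]] = I holds if and only if there exists φ ∈ ℝ such that a·d − b·c = exp(2iφ) and the four numbers exp(−iφ)·a, exp(−iφ)·b, exp(−iφ)·c, exp(−iφ)·d are all real. -/
/-!
Write `D = a * d - b * c`. Both sides say that `‖D‖ = 1` and `D * conj x = x` for each of the
entries `x = a, b, c, d`. For the matrix identity this is because the entrywise conjugate of the
adjugate is then the inverse, that is, the adjugate divided by `D`. For the phase condition, write
`D = exp (2 * φ * I)`; then `D * conj x = x` says that `exp (-(φ * I)) * x` equals its own conjugate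
(`exp_mul_real_iff`).
-/

open Complex

/-- `x` lies on the real line through `exp (φ * I)` exactly when the reflection across that line
fixes it. -/
theorem exp_mul_real_iff (φ : ℝ) (x : ℂ) :
    (∃ r : ℝ, Complex.exp (-(φ * I)) * x = (r : ℂ)) ↔
      Complex.exp (2 * φ * I) * (starRingEnd ℂ) x = x := by
  have h_conj : (starRingEnd ℂ) (Complex.exp (-(φ * I))) = Complex.exp (φ * I) := by
    rw [← Complex.exp_conj]; simp
  have h_inv : Complex.exp (φ * I) * Complex.exp (-(φ * I)) = 1 := by
    rw [← Complex.exp_add]; simp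
  have h_sq : Complex.exp (2 * φ * I) = Complex.exp (φ * I) * Complex.exp (φ * I) := by
    rw [← Complex.exp_add]; ring_nf
  rw [h_sq, show (∃ r : ℝ, Complex.exp (-(φ * I)) * x = (r : ℂ)) ↔ _ from
    Complex.conj_eq_iff_real.symm, map_mul, h_conj]
  constructor <;> intro h
  · linear_combination Complex.exp (φ * I) * h + x * h_inv
  · linear_combination Complex.exp (-(φ * I)) * h -
      Complex.exp (φ * I) * (starRingEnd ℂ) x * h_inv

theorem stmt11 (a b c d : ℂ) :
    (!![a, b; c, d] * !![(starRingEnd ℂ) d, -(starRingEnd ℂ) b;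
        -(starRingEnd ℂ) c, (starRingEnd ℂ) a] = (1 : Matrix (Fin 2) (Fin 2) ℂ)) ↔
      ∃ φ : ℝ, a * d - b * c = Complex.exp (2 * φ * I) ∧
        (∃ ra : ℝ, Complex.exp (-(φ * I)) * a = (ra : ℂ)) ∧
        (∃ rb : ℝ, Complex.exp (-(φ * I)) * b = (rb : ℂ)) ∧
        (∃ rc : ℝ, Complex.exp (-(φ * I)) * c = (rc : ℂ)) ∧
        (∃ rd : ℝ, Complex.exp (-(φ * I)) * d = (rd : ℂ)) := by
  simp only [exp_mul_real_iff]
  have h_entries : (!![a, b; c, d] * !![(starRingEnd ℂ) d, -(starRingEnd ℂ) b;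
        -(starRingEnd ℂ) c, (starRingEnd ℂ) a] = (1 : Matrix (Fin 2) (Fin 2) ℂ)) ↔
      (a * (starRingEnd ℂ) d - b * (starRingEnd ℂ) c = 1 ∧
        b * (starRingEnd ℂ) a - a * (starRingEnd ℂ) b = 0) ∧
      (c * (starRingEnd ℂ) d - d * (starRingEnd ℂ) c = 0 ∧
        d * (starRingEnd ℂ) a - c * (starRingEnd ℂ) b = 1) := by
    rw [← Matrix.ext_iff]
    simp [Fin.forall_fin_two, Matrix.mul_apply, Fin.sum_univ_two, sub_eq_add_neg, add_comm]
  rw [h_entries]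
  constructor
  · rintro ⟨⟨h1, h2⟩, h3, h4⟩
    have ha : (a * d - b * c) * (starRingEnd ℂ) a = a := by
      linear_combination a * h4 - c * h2
    have hb : (a * d - b * c) * (starRingEnd ℂ) b = b := by
      linear_combination b * h4 - d * h2
    have hc : (a * d - b * c) * (starRingEnd ℂ) c = c := by
      linear_combination c * h1 - a * h3
    have hd : (a * d - b * c) * (starRingEnd ℂ) d = d := by
      linear_combination d * h1 - b * h3
    have h_unit : ‖a * d - b * c‖ = 1 := by
      have h : (a * d - b * c) * (starRingEnd ℂ) (a * d - b * c) = 1 := by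
        simp only [map_sub, map_mul]
        linear_combination (starRingEnd ℂ) d * ha - (starRingEnd ℂ) c * hb + h1
      rw [Complex.mul_conj'] at h
      have h' : ‖a * d - b * c‖ ^ 2 = 1 := by exact_mod_cast h
      exact (pow_eq_one_iff_of_nonneg (norm_nonneg _) two_ne_zero).mp h'
    obtain ⟨θ, hθ⟩ := (Complex.norm_eq_one_iff _).mp h_unit
    have hD : Complex.exp (2 * ((θ / 2 : ℝ) : ℂ) * I) = a * d - b * c := by
      rw [← hθ]; push_cast; ring_nf
    refine ⟨θ / 2, hD.symm, ?_⟩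
    rw [hD]
    exact ⟨ha, hb, hc, hd⟩
  · rintro ⟨φ, hD, ha, hb, hc, hd⟩
    have h0 := Complex.exp_ne_zero (2 * φ * I)
    -- Each entry identity becomes polynomial after multiplication by the determinant.
    refine ⟨⟨mul_left_cancel₀ h0 ?_, mul_left_cancel₀ h0 ?_⟩,
      mul_left_cancel₀ h0 ?_, mul_left_cancel₀ h0 ?_⟩
    · linear_combination a * hd - b * hc + hD
    · linear_combination b * ha - a * hb
    · linear_combination c * hd - d * hc
    · linear_combination d * ha - c * hb + hD
end

section
/- Let A be a densely defined closed symmetric operator in a complex Hilbert space H, and let Ã be a closed operator with A ⊆ Ã ⊆ A* (graph inclusions) such that dim(dom A*/dom Ã*) ≤ 1. Let λ ∈ ℂ and suppose that the eigenspace {g ∈ dom A* : A* g = conj(λ)·g} has dimension at least 2. Then the range {Ã f − λ·f : f ∈ dom Ã} is not dense in H. -/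
/-!
Write `K` for the eigenspace `ker (A† - conj lam)`. Since `dim K ≥ 2` while
`dim (dom A† / dom B†) ≤ 1`, some nonzero `g ∈ K` lies in `dom B†`. As `A ≤ B`, the operators
`B†` and `A†` agree at `g`, so `B† g = conj lam • g`, which says exactly that `g` is orthogonal
to the range of `B - lam`; hence that range is not dense.
-/

open scoped InnerProductSpace

theorem stmt18 {H : Type*} [NormedAddCommGroup H] [InnerProductSpace ℂ H] [CompleteSpace H]
    (A : H →ₗ.[ℂ] H) (hdense : Dense (A.domain : Set H)) (hclosed : A.IsClosed)
    (hsymm : ∀ f g : A.domain, ⟪A f, (g : H)⟫_ℂ = ⟪(f : H), A g⟫_ℂ)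
    (B : H →ₗ.[ℂ] H) (hBclosed : B.IsClosed) (hAB : A ≤ B) (hBA : B ≤ A.adjoint)
    (hcodim : Module.rank ℂ
      (↥A.adjoint.domain ⧸ Submodule.comap A.adjoint.domain.subtype B.adjoint.domain) ≤ 1)
    (lam : ℂ)
    (heig : 2 ≤ Module.rank ℂ
      ↥(LinearMap.ker (A.adjoint.toFun - (starRingEnd ℂ) lam • A.adjoint.domain.subtype))) :
    ¬ Dense (Set.range (fun f : B.domain => B f - lam • (f : H))) := by
  have hdB : Dense (B.domain : Set H) := hdense.mono hAB.1
  set K := LinearMap.ker (A.adjoint.toFun - (starRingEnd ℂ) lam • A.adjoint.domain.subtype)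
  set Q := Submodule.comap A.adjoint.domain.subtype B.adjoint.domain
  -- By dimension count, `K` cannot embed into `dom A† / dom B†`.
  have hninj : ¬ Function.Injective (Q.mkQ.comp K.subtype) := fun hinj =>
    absurd (heig.trans ((LinearMap.rank_le_of_injective _ hinj).trans hcodim))
      (not_le.mpr Cardinal.one_lt_two)
  obtain ⟨g, hg, hg0⟩ : ∃ g : K, (Q.mkQ.comp K.subtype) g = 0 ∧ g ≠ 0 := by
    by_contra! h
    exact hninj ((injective_iff_map_eq_zero _).mpr h)
  have hgB : ((g : A.adjoint.domain) : H) ∈ B.adjoint.domain := by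
    have h : (g : A.adjoint.domain) ∈ Q := (Submodule.Quotient.mk_eq_zero Q).mp hg
    exact h
  have hgA : A.adjoint (g : A.adjoint.domain) =
      (starRingEnd ℂ) lam • ((g : A.adjoint.domain) : H) :=
    sub_eq_zero.mp (LinearMap.mem_ker.mp g.2)
  have hadj : A.adjoint (g : A.adjoint.domain) = B.adjoint ⟨_, hgB⟩ := by
    refine LinearPMap.adjoint_apply_eq hdense _ fun x => ?_
    have h := LinearPMap.adjoint_isFormalAdjoint hdB ⟨_, hgB⟩ ⟨x, hAB.1 x.2⟩
    rw [← hAB.2 (x := x) (y := ⟨x, hAB.1 x.2⟩) rfl] at h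
    exact h
  intro hD
  refine hg0 (Subtype.ext (Subtype.ext (hD.eq_zero_of_inner_left ℂ ?_)))
  rintro _ ⟨f, rfl⟩
  have h := LinearPMap.adjoint_isFormalAdjoint hdB ⟨_, hgB⟩ f
  rw [← hadj, hgA, inner_smul_left, Complex.conj_conj] at h
  rw [inner_sub_right, inner_smul_right, sub_eq_zero]
  exact h.symm
end
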